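/- Let (M, μ) be a measure space, let ε > 0 and N > 0 be real numbers, and let A : M → ℝ be a nonnegative μ-integrable function. Then the functional J(φ) = ∫_M A/(N (φ + ε)^N) dμ is well-defined and real-valued on Ω_ε, and J is continuous on Ω_ε with respect to the L¹(μ) distance: for every φ₀ ∈ Ω_ε and every ν > 0 there exists δ > 0 such that every φ ∈ Ω_ε with ‖φ − φ₀‖_{L¹(μ)} < δ satisfies |J(φ) − J(φ₀)| < ν. -/

import Mathlib

open MeasureTheory

/-- On a measure space `(M, μ)`, for `ε > 0`, `N > 0` and a nonnegative integrable
function `A`, the functional `J(φ) = ∫ A / (N (φ + ε)^N) dμ` is well-defined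
(the integrand is integrable) on the set `Ω_ε` of integrable functions `φ ≥ -ε/2` a.e.,
and `J` is continuous on `Ω_ε` with respect to the `L¹(μ)` distance. -/
theorem stmt1 {M : Type*} [MeasurableSpace M] (μ : Measure M)
    (ε N : ℝ) (hε : 0 < ε) (hN : 0 < N)
    (A : M → ℝ) (hA0 : ∀ x, 0 ≤ A x) (hAint : Integrable A μ) :
    let Ω : Set (M → ℝ) := {φ | Integrable φ μ ∧ ∀ᵐ x ∂μ, -(ε / 2) ≤ φ x}
    let J : (M → ℝ) → ℝ := fun φ => ∫ x, A x / (N * (φ x + ε) ^ N) ∂μ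
    (∀ φ ∈ Ω, Integrable (fun x => A x / (N * (φ x + ε) ^ N)) μ) ∧
    (∀ φ₀ ∈ Ω, ∀ ν : ℝ, 0 < ν → ∃ δ : ℝ, 0 < δ ∧ ∀ φ ∈ Ω,
      (∫ x, |φ x - φ₀ x| ∂μ) < δ → |J φ - J φ₀| < ν) := by
  intro Ω J
  have meas : ∀ φ ∈ Ω, AEStronglyMeasurable (fun x => A x / (N * (φ x + ε) ^ N)) μ := by
    intro φ hφ
    have h1 := hAint.aemeasurable
    have h2 := hφ.1.aemeasurable
    exact (h1.div (((h2.add_const ε).pow_const N).const_mul N)).aestronglyMeasurable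
  have bd : ∀ φ ∈ Ω, ∀ᵐ x ∂μ,
      ‖A x / (N * (φ x + ε) ^ N)‖ ≤ A x / (N * (ε / 2) ^ N) := by
    intro φ hφ
    filter_upwards [hφ.2] with x hx
    have h1 : ε / 2 ≤ φ x + ε := by linarith
    have h2 : 0 < ε / 2 := by linarith
    have h3 : (ε / 2) ^ N ≤ (φ x + ε) ^ N := Real.rpow_le_rpow h2.le h1 hN.le
    have h4 : 0 < (ε / 2) ^ N := Real.rpow_pos_of_pos h2 N
    have h5 : 0 < (φ x + ε) ^ N := h4.trans_le h3
    rw [Real.norm_of_nonneg (div_nonneg (hA0 x) (mul_pos hN h5).le)]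
    exact div_le_div_of_nonneg_left (hA0 x) (mul_pos hN h4)
      (mul_le_mul_of_nonneg_left h3 hN.le)
  have bint : Integrable (fun x => A x / (N * (ε / 2) ^ N)) μ := hAint.div_const _
  refine ⟨fun φ hφ => bint.mono' (meas φ hφ) (bd φ hφ), ?_⟩
  intro φ₀ h₀ ν hν
  by_contra! hcon
  have hpos : ∀ n : ℕ, (0 : ℝ) < 1 / ((n : ℝ) + 1) := fun n => Nat.one_div_pos_of_nat
  choose f hfΩ hfd hfν using fun n : ℕ => hcon _ (hpos n)
  have hL : Filter.Tendsto (fun n => ∫ x, |f n x - φ₀ x| ∂μ) Filter.atTop (nhds 0) :=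
    squeeze_zero (fun n => integral_nonneg fun x => abs_nonneg _) (fun n => (hfd n).le)
      tendsto_one_div_add_atTop_nhds_zero_nat
  have hE : Filter.Tendsto (fun n => eLpNorm (f n - φ₀) 1 μ) Filter.atTop (nhds 0) := by
    have h := ENNReal.tendsto_ofReal hL
    rw [ENNReal.ofReal_zero] at h
    refine h.congr fun n => ?_
    rw [eLpNorm_one_eq_lintegral_enorm,
      ← ofReal_integral_norm_eq_lintegral_enorm ((hfΩ n).1.sub h₀.1)]
    rfl
  have hM : TendstoInMeasure μ f Filter.atTop φ₀ :=
    tendstoInMeasure_of_tendsto_eLpNorm one_ne_zero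
      (fun n => (hfΩ n).1.aestronglyMeasurable) h₀.1.aestronglyMeasurable hE
  obtain ⟨ns, -, hns⟩ := hM.exists_seq_tendsto_ae
  have hJ : Filter.Tendsto (fun k => J (f (ns k))) Filter.atTop (nhds (J φ₀)) := by
    refine tendsto_integral_of_dominated_convergence _ (fun k => meas _ (hfΩ (ns k))) bint
      (fun k => bd _ (hfΩ (ns k))) ?_
    filter_upwards [hns, h₀.2] with x hx hx0
    have h1 : 0 < φ₀ x + ε := by linarith
    refine Filter.Tendsto.div tendsto_const_nhds
      (((hx.add_const ε).rpow_const (Or.inl h1.ne')).const_mul N) ?_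
    exact (mul_pos hN (Real.rpow_pos_of_pos h1 N)).ne'
  obtain ⟨K, hK⟩ := Metric.tendsto_atTop.1 hJ ν hν
  have := hK K le_rfl
  rw [Real.dist_eq] at this
  exact absurd this (not_lt.2 (hfν (ns K)))
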